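/- arXiv:1602.04057 — 2 statements merged into one kernel-verified Lean document; each statement's English description precedes it below -/
import Mathlib

section
/- Let E be a real separable Banach space and Ψ : E → ℝ a bounded function of class C² with bounded first and second Fréchet derivatives, with sup_{x∈E} ‖D²Ψ(x)‖ ≤ M. Let X and Z be independent E-valued random variables with Z Bochner integrable, 𝔼[Z] = 0, and 𝔼[‖Z‖²] < ∞. Then |𝔼[Ψ(X + Z)] − 𝔼[Ψ(X)]| ≤ (M/2) 𝔼[‖Z‖²]. -/
open MeasureTheory ProbabilityTheory

/-- Second-order Taylor estimate with bounded second derivative. -/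
lemma taylor_two_bound {E : Type*} [NormedAddCommGroup E] [NormedSpace ℝ E]
    (Ψ : E → ℝ) (M : ℝ) (hΨ : ContDiff ℝ 2 Ψ)
    (hΨ2 : ∀ x : E, ‖fderiv ℝ (fderiv ℝ Ψ) x‖ ≤ M) (x z : E) :
    |Ψ (x + z) - Ψ x - fderiv ℝ Ψ x z| ≤ M / 2 * ‖z‖ ^ 2 := by
  have hd : Differentiable ℝ Ψ := hΨ.differentiable (by norm_num)
  have hc1 : ContDiff ℝ 1 (fderiv ℝ Ψ) := hΨ.fderiv_right (by norm_num)
  have hd1 : Differentiable ℝ (fderiv ℝ Ψ) := hc1.differentiable (by norm_num)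
  have hlip : ∀ y, ‖fderiv ℝ Ψ y - fderiv ℝ Ψ x‖ ≤ M * ‖y - x‖ := fun y =>
    convex_univ.norm_image_sub_le_of_norm_fderiv_le (fun u _ => hd1 u) (fun u _ => hΨ2 u)
      (Set.mem_univ x) (Set.mem_univ y)
  have hder : ∀ t : ℝ, HasDerivAt (fun t : ℝ => Ψ (x + t • z) - Ψ x - t * fderiv ℝ Ψ x z)
      (fderiv ℝ Ψ (x + t • z) z - fderiv ℝ Ψ x z) t := by
    intro t
    have h1 : HasDerivAt (fun t : ℝ => x + t • z) z t := by
      simpa using ((hasDerivAt_id t).smul_const z).const_add x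
    have h2 := (hd (x + t • z)).hasFDerivAt.comp_hasDerivAt t h1
    have h3 : HasDerivAt (fun t : ℝ => t * fderiv ℝ Ψ x z) (fderiv ℝ Ψ x z) t := by
      simpa using (hasDerivAt_id t).mul_const (fderiv ℝ Ψ x z)
    exact (h2.sub_const (Ψ x)).sub h3
  have hB : ∀ t : ℝ, HasDerivAt (fun t : ℝ => M / 2 * ‖z‖ ^ 2 * t ^ 2) (M * ‖z‖ ^ 2 * t) t := by
    intro t
    exact ((hasDerivAt_pow 2 t).const_mul (M / 2 * ‖z‖ ^ 2)).congr_deriv (by simp; ring)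
  have key := image_norm_le_of_norm_deriv_right_le_deriv_boundary (a := 0) (b := 1)
    (fun t _ => (hder t).continuousAt.continuousWithinAt)
    (fun t _ => (hder t).hasDerivWithinAt) (by simp) hB (by
      intro t ht
      have h4 := hlip (x + t • z)
      rw [add_sub_cancel_left, norm_smul, Real.norm_of_nonneg ht.1] at h4
      calc ‖fderiv ℝ Ψ (x + t • z) z - fderiv ℝ Ψ x z‖
          = ‖(fderiv ℝ Ψ (x + t • z) - fderiv ℝ Ψ x) z‖ := by simp
        _ ≤ ‖fderiv ℝ Ψ (x + t • z) - fderiv ℝ Ψ x‖ * ‖z‖ := ContinuousLinearMap.le_opNorm _ _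
        _ ≤ (M * (t * ‖z‖)) * ‖z‖ := by gcongr
        _ = M * ‖z‖ ^ 2 * t := by ring)
    (Set.right_mem_Icc.2 zero_le_one)
  simpa using key

/-- Weak-order-is-twice-strong-order mechanism: if `Ψ : E → ℝ` is bounded and `C²` with bounded
first and second derivatives (`‖D²Ψ‖ ≤ M`), and `X`, `Z` are independent `E`-valued random
variables with `Z` integrable, centred, and square integrable, then
`|𝔼[Ψ(X+Z)] − 𝔼[Ψ(X)]| ≤ (M/2) 𝔼[‖Z‖²]`. -/
theorem second_order_weak_error_bound
    {Ω : Type*} [MeasurableSpace Ω] (μ : Measure Ω) [IsProbabilityMeasure μ]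
    {E : Type*} [NormedAddCommGroup E] [NormedSpace ℝ E] [CompleteSpace E]
    [SecondCountableTopology E] [MeasurableSpace E] [BorelSpace E]
    (Ψ : E → ℝ) (CΨ L M : ℝ)
    (hΨb : ∀ x : E, |Ψ x| ≤ CΨ)
    (hΨ : ContDiff ℝ 2 Ψ)
    (hΨ1 : ∀ x : E, ‖fderiv ℝ Ψ x‖ ≤ L)
    (hΨ2 : ∀ x : E, ‖fderiv ℝ (fderiv ℝ Ψ) x‖ ≤ M)
    (X Z : Ω → E) (hX : Measurable X) (hZ : Measurable Z)
    (hindep : IndepFun X Z μ)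
    (hZint : Integrable Z μ) (hZmean : ∫ ω, Z ω ∂μ = 0)
    (hZsq : Integrable (fun ω => ‖Z ω‖ ^ 2) μ) :
    |(∫ ω, Ψ (X ω + Z ω) ∂μ) - ∫ ω, Ψ (X ω) ∂μ| ≤ M / 2 * ∫ ω, ‖Z ω‖ ^ 2 ∂μ := by
  have hcΨ : Continuous Ψ := hΨ.continuous
  have hcD : Continuous (fderiv ℝ Ψ) := hΨ.continuous_fderiv (by norm_num)
  have hD : Integrable (fderiv ℝ Ψ) (μ.map X) := by
    have := Measure.isProbabilityMeasure_map (μ := μ) hX.aemeasurable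
    exact Integrable.of_bound hcD.aestronglyMeasurable L (Filter.Eventually.of_forall hΨ1)
  have hZ' : Integrable (fun z : E => z) (μ.map Z) :=
    (integrable_map_measure continuous_id.aestronglyMeasurable hZ.aemeasurable).2 hZint
  have h0 : ∫ ω, fderiv ℝ Ψ (X ω) (Z ω) ∂μ = 0 := by
    have := hindep.integral_bilin_comp_comp hX.aemeasurable hZ.aemeasurable hD hZ'
      (ContinuousLinearMap.id ℝ (E →L[ℝ] ℝ))
    simpa [hZmean] using this
  have i1 : Integrable (fun ω => Ψ (X ω + Z ω)) μ :=
    Integrable.of_bound (hcΨ.measurable.comp (hX.add hZ)).aestronglyMeasurable CΨ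
      (Filter.Eventually.of_forall fun ω => hΨb _)
  have i2 : Integrable (fun ω => Ψ (X ω)) μ :=
    Integrable.of_bound (hcΨ.measurable.comp hX).aestronglyMeasurable CΨ
      (Filter.Eventually.of_forall fun ω => hΨb _)
  have i3 : Integrable (fun ω => fderiv ℝ Ψ (X ω) (Z ω)) μ := by
    have hc : Continuous (fun p : E × E => fderiv ℝ Ψ p.1 p.2) := by fun_prop
    refine (hZint.norm.const_mul L).mono'
      (hc.measurable.comp (hX.prodMk hZ)).aestronglyMeasurable
      (Filter.Eventually.of_forall fun ω => ?_)
    exact ((fderiv ℝ Ψ (X ω)).le_opNorm _).trans (by gcongr; exact hΨ1 _)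
  have e : (∫ ω, Ψ (X ω + Z ω) ∂μ) - ∫ ω, Ψ (X ω) ∂μ
      = ∫ ω, (Ψ (X ω + Z ω) - Ψ (X ω) - fderiv ℝ Ψ (X ω) (Z ω)) ∂μ := by
    have i12 : Integrable (fun ω => Ψ (X ω + Z ω) - Ψ (X ω)) μ := i1.sub i2
    rw [integral_sub i12 i3, integral_sub i1 i2, h0, sub_zero]
  rw [e, ← integral_const_mul, ← Real.norm_eq_abs]
  exact norm_integral_le_of_norm_le (hZsq.const_mul _)
    (Filter.Eventually.of_forall fun ω => taylor_two_bound Ψ M hΨ hΨ2 (X ω) (Z ω))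
end

section
/- Let m ≥ 2 be an integer and θ ∈ (0,2). There exists a constant C = C(m,θ) such that for every integer N ≥ 1, ∑_{k∈ℤ, |k|≤N} ∑_{ℓ∈ℤ, |ℓ|>N} |ℓ−k|^{−2m} (|ℓ|+1)^{−θ} ≤ C N^{−θ}. -/
open Real

lemma dsb_pointwise (m : ℕ) (hm : 2 ≤ m) (θ : ℝ) (hθ0 : 0 < θ) (N : ℕ) (hN : 1 ≤ N) (k l : ℤ)
    (hk : |k| ≤ (N : ℤ)) (hl : (N : ℤ) < |l|) :
    |(l : ℝ) - (k : ℝ)| ^ (-(2 * (m : ℝ))) * (|(l : ℝ)| + 1) ^ (-θ) ≤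
      (N : ℝ) ^ (-θ) * ((1 / (((N : ℤ) + 1 - |k| : ℤ) : ℝ) ^ 2) *
        (1 / ((|l| - (N : ℤ) : ℤ) : ℝ) ^ 2)) := by
  have hd0 : |l| - |k| ≤ |l - k| := abs_sub_abs_le_abs_sub l k
  have h1 : (1 : ℝ) ≤ (((N : ℤ) + 1 - |k| : ℤ) : ℝ) := by exact_mod_cast (by omega)
  have h2 : (1 : ℝ) ≤ ((|l| - (N : ℤ) : ℤ) : ℝ) := by exact_mod_cast (by omega)
  have h3 : (((N : ℤ) + 1 - |k| : ℤ) : ℝ) ≤ ((|l - k| : ℤ) : ℝ) := by exact_mod_cast (by omega)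
  have h4 : ((|l| - (N : ℤ) : ℤ) : ℝ) ≤ ((|l - k| : ℤ) : ℝ) := by exact_mod_cast (by omega)
  have e : |(l : ℝ) - (k : ℝ)| = ((|l - k| : ℤ) : ℝ) := by push_cast; rfl
  rw [e]
  have hl' : (N : ℝ) ≤ |(l : ℝ)| := by
    have : ((N : ℤ) : ℝ) ≤ ((|l| : ℤ) : ℝ) := by exact_mod_cast hl.le
    simpa using this
  generalize ((|l - k| : ℤ) : ℝ) = d at *
  generalize (((N : ℤ) + 1 - |k| : ℤ) : ℝ) = a at *
  generalize ((|l| - (N : ℤ) : ℤ) : ℝ) = b at *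
  have hN0 : (0 : ℝ) < N := by exact_mod_cast hN
  have hA : (|(l : ℝ)| + 1) ^ (-θ) ≤ (N : ℝ) ^ (-θ) :=
    Real.rpow_le_rpow_of_nonpos hN0 (by linarith) (by linarith)
  have hm' : (2 : ℝ) ≤ m := by exact_mod_cast hm
  have hB : d ^ (-(2 * (m : ℝ))) ≤ 1 / a ^ 2 * (1 / b ^ 2) := by
    calc d ^ (-(2 * (m : ℝ))) ≤ d ^ (-((4 : ℕ) : ℝ)) :=
          Real.rpow_le_rpow_of_exponent_le (by linarith) (by push_cast; linarith)
      _ = 1 / d ^ 2 * (1 / d ^ 2) := by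
          rw [Real.rpow_neg (by linarith), Real.rpow_natCast]
          have : d ≠ 0 := by linarith
          field_simp
      _ ≤ _ := by gcongr
  rw [mul_comm]
  exact mul_le_mul hA hB (Real.rpow_nonneg (by linarith) _) (Real.rpow_nonneg hN0.le _)

/-- Double sum estimate (first off-diagonal block): for `m ≥ 2` and `θ ∈ (0,2)` there is a
constant `C` such that for every `N ≥ 1`,
`∑_{|k|≤N} ∑_{|ℓ|>N} |ℓ−k|^{−2m} (|ℓ|+1)^{−θ} ≤ C N^{−θ}`. -/
theorem double_sum_block_estimate_low_high
    (m : ℕ) (hm : 2 ≤ m) (θ : ℝ) (hθ0 : 0 < θ) (hθ2 : θ < 2) :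
    ∃ C : ℝ, 0 < C ∧ ∀ N : ℕ, 1 ≤ N →
      (∑' k : ℤ, ∑' l : ℤ,
        if |k| ≤ (N : ℤ) ∧ (N : ℤ) < |l| then
          |(l : ℝ) - (k : ℝ)| ^ (-(2 * (m : ℝ))) * (|(l : ℝ)| + 1) ^ (-θ)
        else 0) ≤ C * (N : ℝ) ^ (-θ) := by
  obtain ⟨g, hg⟩ : ∃ g : ℤ → ℝ, g = fun n : ℤ => 1 / (n : ℝ) ^ 2 := ⟨_, rfl⟩
  have hgs : Summable g := by
    rw [hg]; exact Real.summable_one_div_int_pow.mpr (by norm_num)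
  have hg0 : ∀ n, 0 ≤ g n := fun n => by rw [hg]; positivity
  obtain ⟨S, hS⟩ := hgs
  refine ⟨(S + S) * (S + S) + 1, by nlinarith [mul_self_nonneg (S + S)], fun N hN => ?_⟩
  have hF : HasSum (fun k : ℤ => g ((N : ℤ) + 1 - k) + g ((N : ℤ) + 1 + k)) (S + S) :=
    ((Equiv.subLeft ((N : ℤ) + 1)).hasSum_iff.mpr hS).add
      ((Equiv.addLeft ((N : ℤ) + 1)).hasSum_iff.mpr hS)
  have hG : HasSum (fun l : ℤ => g (l - N) + g (-l - N)) (S + S) := by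
    refine ((Equiv.subRight (N : ℤ)).hasSum_iff.mpr hS).add ?_
    exact ((Equiv.neg ℤ).trans (Equiv.subRight (N : ℤ))).hasSum_iff.mpr hS
  obtain ⟨F, hFd⟩ : ∃ F : ℤ → ℝ, F = fun k : ℤ => g ((N : ℤ) + 1 - k) + g ((N : ℤ) + 1 + k) :=
    ⟨_, rfl⟩
  obtain ⟨G, hGd⟩ : ∃ G : ℤ → ℝ, G = fun l : ℤ => g (l - N) + g (-l - N) := ⟨_, rfl⟩
  rw [← hFd] at hF
  rw [← hGd] at hG
  have hF0 : ∀ k, 0 ≤ F k := fun k => by rw [hFd]; exact add_nonneg (hg0 _) (hg0 _)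
  have hG0 : ∀ k, 0 ≤ G k := fun k => by rw [hGd]; exact add_nonneg (hg0 _) (hg0 _)
  have hFk : ∀ k : ℤ, g ((N : ℤ) + 1 - |k|) ≤ F k := fun k => by
    rw [hFd]
    rcases abs_choice k with h | h <;> rw [h]
    · linarith [hg0 ((N : ℤ) + 1 + k)]
    · rw [sub_neg_eq_add]; linarith [hg0 ((N : ℤ) + 1 - k)]
  have hGl : ∀ l : ℤ, g (|l| - N) ≤ G l := fun l => by
    rw [hGd]
    rcases abs_choice l with h | h <;> rw [h]
    · linarith [hg0 (-l - N)]
    · linarith [hg0 (l - N)]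
  have hP : (0 : ℝ) ≤ (N : ℝ) ^ (-θ) := Real.rpow_nonneg (Nat.cast_nonneg _) _
  obtain ⟨T, hT⟩ : ∃ T : ℤ → ℤ → ℝ, T = fun k l : ℤ =>
      if |k| ≤ (N : ℤ) ∧ (N : ℤ) < |l| then
          |(l : ℝ) - (k : ℝ)| ^ (-(2 * (m : ℝ))) * (|(l : ℝ)| + 1) ^ (-θ)
        else 0 := ⟨_, rfl⟩
  have hT0 : ∀ k l, 0 ≤ T k l := fun k l => by
    rw [hT]; dsimp only; split_ifs <;> positivity
  have hTle : ∀ k l, T k l ≤ (N : ℝ) ^ (-θ) * F k * G l := fun k l => by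
    rw [hT]; dsimp only
    split_ifs with h
    · refine (dsb_pointwise m hm θ hθ0 N hN k l h.1 h.2).trans ?_
      have h1 := hFk k
      have h2 := hGl l
      have h3 := mul_le_mul h1 h2 (hg0 _) (hF0 _)
      rw [mul_assoc]
      refine mul_le_mul_of_nonneg_left ?_ hP
      simpa only [hg] using h3
    · exact mul_nonneg (mul_nonneg hP (hF0 _)) (hG0 _)
  have hin : ∀ k, ∑' l, T k l ≤ (N : ℝ) ^ (-θ) * F k * (S + S) := fun k => by
    have hs := hG.mul_left ((N : ℝ) ^ (-θ) * F k)
    exact hasSum_le (hTle k) (Summable.of_nonneg_of_le (hT0 k) (hTle k) hs.summable).hasSum hs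
  have hs := (hF.mul_left ((N : ℝ) ^ (-θ))).mul_right (S + S)
  have hfin : ∑' k, ∑' l, T k l ≤ (N : ℝ) ^ (-θ) * (S + S) * (S + S) := by
    have hs1 := Summable.of_nonneg_of_le (fun k => tsum_nonneg (hT0 k)) hin hs.summable
    exact hasSum_le hin hs1.hasSum hs
  rw [hT] at hfin
  refine hfin.trans ?_
  linarith
end
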